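/- arXiv:1604.07094 — 5 statements merged into one kernel-verified Lean document; each statement's English description precedes it below -/
import Mathlib

section
/- Let n ≥ 1 and let L be a weighted Laplacian of a path graph on n vertices. Let S = {ℓ₁ < ℓ₂ < ⋯ < ℓ_k} be a nonempty subset of {1,…,n}. Then the grounded Laplacian L_ff and every segment submatrix L_{(a→b)} appearing below are invertible, and (1/2)·tr(L_ff⁻¹) = (1/2)·tr(L_{(0→ℓ₁)}⁻¹) + (1/2)·Σ_{i=1}^{k−1} tr(L_{(ℓ_i→ℓ_{i+1})}⁻¹) + (1/2)·tr(L_{(ℓ_k→n+1)}⁻¹). -/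
open Matrix

/-- `L` is a weighted Laplacian of a path graph on `n` vertices (vertex `i` of `{1,…,n}`
corresponds to the index `⟨i-1⟩ : Fin n`): symmetric, negative on the super-diagonal,
zero outside the tridiagonal band, and all row sums zero. -/
def IsPathLaplacian {n : ℕ} (L : Matrix (Fin n) (Fin n) ℝ) : Prop :=
  L.IsSymm ∧
  (∀ i j : Fin n, (i : ℕ) + 1 = (j : ℕ) → L i j < 0) ∧
  (∀ i j : Fin n, (i : ℕ) + 2 ≤ (j : ℕ) → L i j = 0) ∧
  (∀ i : Fin n, ∑ j, L i j = 0)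

/-- `L_{(a→b)}`: the principal submatrix of `L` on the (1-based) nodes strictly between
`a` and `b`; node `j` corresponds to index `⟨j-1⟩`, i.e. the 1-based label of `i : Fin n`
is `(i : ℕ) + 1`. -/
def pseg {n : ℕ} (L : Matrix (Fin n) (Fin n) ℝ) (a b : ℕ) :
    Matrix {j : Fin n // a < (j : ℕ) + 1 ∧ (j : ℕ) + 1 < b}
      {j : Fin n // a < (j : ℕ) + 1 ∧ (j : ℕ) + 1 < b} ℝ :=
  L.submatrix (·.val) (·.val)

/-- The grounded Laplacian `L_ff`: the principal submatrix of `L` obtained by deleting the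
rows and columns indexed by `S`. -/
def grounded {n : ℕ} (L : Matrix (Fin n) (Fin n) ℝ) (S : Finset (Fin n)) :
    Matrix {i : Fin n // i ∉ S} {i : Fin n // i ∉ S} ℝ :=
  L.submatrix (·.val) (·.val)


namespace PathAux

/-- principal submatrix on a predicate -/
def psub {n : ℕ} (L : Matrix (Fin n) (Fin n) ℝ) (p : Fin n → Prop) :
    Matrix {i : Fin n // p i} {i : Fin n // p i} ℝ :=
  L.submatrix (·.val) (·.val)

theorem off_nonpos {n : ℕ} {L : Matrix (Fin n) (Fin n) ℝ} (hL : IsPathLaplacian L)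
    (i j : Fin n) (h : i ≠ j) : L i j ≤ 0 := by
  obtain ⟨hs, h1, h2, _⟩ := hL
  have key : ∀ i j : Fin n, (i : ℕ) < j → L i j ≤ 0 := by
    intro i j hij
    by_cases h' : (i : ℕ) + 1 = j
    · exact (h1 i j h').le
    · exact (h2 i j (by omega)).le
  rcases lt_or_gt_of_ne (fun h' => h (Fin.ext h') : (i : ℕ) ≠ j) with h' | h'
  · exact key i j h'
  · rw [← hs.apply i j]; exact key j i h'

theorem far_zero {n : ℕ} {L : Matrix (Fin n) (Fin n) ℝ} (hL : IsPathLaplacian L)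
    (i j : Fin n) (h : (i : ℕ) + 2 ≤ j ∨ (j : ℕ) + 2 ≤ i) : L i j = 0 := by
  obtain ⟨hs, h1, h2, _⟩ := hL
  rcases h with h | h
  · exact h2 i j h
  · rw [← hs.apply i j]; exact h2 j i h

theorem quad {n : ℕ} {L : Matrix (Fin n) (Fin n) ℝ} (hL : IsPathLaplacian L)
    (y : Fin n → ℝ) (h0 : ∑ i, y i * ∑ j, L i j * y j = 0) (s : Fin n) (hs : y s = 0) :
    ∀ i, y i = 0 := by
  have hrow := hL.2.2.2
  have e1 : ∑ i, ∑ j, L i j * (y i * y i) = 0 := by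
    simp [← Finset.sum_mul, hrow]
  have e2 : ∑ i, ∑ j, L i j * (y j * y j) = 0 := by
    rw [Finset.sum_comm, ← e1]
    refine Finset.sum_congr rfl fun i _ => Finset.sum_congr rfl fun j _ => ?_
    rw [hL.1.apply]
  have e3 : ∑ i, ∑ j, L i j * (y i * y j) = 0 := by
    rw [← h0]
    refine Finset.sum_congr rfl fun i _ => ?_
    rw [Finset.mul_sum]
    refine Finset.sum_congr rfl fun j _ => ?_
    ring
  have e4 : ∑ i, ∑ j, (-L i j) * (y i - y j) ^ 2 = 0 := by
    have : ∑ i, ∑ j, (-L i j) * (y i - y j) ^ 2 =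
        2 * (∑ i, ∑ j, L i j * (y i * y j)) - (∑ i, ∑ j, L i j * (y i * y i))
          - ∑ i, ∑ j, L i j * (y j * y j) := by
      simp only [Finset.mul_sum, ← Finset.sum_sub_distrib]
      refine Finset.sum_congr rfl fun i _ => Finset.sum_congr rfl fun j _ => ?_
      ring
    rw [this, e1, e2, e3]; ring
  have nn : ∀ i j, 0 ≤ (-L i j) * (y i - y j) ^ 2 := by
    intro i j
    by_cases h : i = j
    · simp [h]
    · exact mul_nonneg (by linarith [off_nonpos hL i j h]) (sq_nonneg _)
  have z : ∀ i j, (-L i j) * (y i - y j) ^ 2 = 0 := by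
    intro i j
    have := (Finset.sum_eq_zero_iff_of_nonneg
      (fun i _ => Finset.sum_nonneg fun j _ => nn i j)).1 e4 i (Finset.mem_univ _)
    exact (Finset.sum_eq_zero_iff_of_nonneg (fun j _ => nn i j)).1 this j (Finset.mem_univ _)
  have step : ∀ i j : Fin n, (i : ℕ) + 1 = j → y i = y j := by
    intro i j h
    have h1 := hL.2.1 i j h
    have h2 := z i j
    rcases mul_eq_zero.1 h2 with h3 | h3
    · linarith
    · have := pow_eq_zero_iff (two_ne_zero) |>.1 h3
      linarith
  have hn : 0 < n := s.pos
  have all : ∀ m (hm : m < n), y ⟨m, hm⟩ = y ⟨0, hn⟩ := by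
    intro m
    induction m with
    | zero => intro _; rfl
    | succ m ih =>
      intro hm
      rw [← ih (by omega)]
      exact (step _ _ rfl).symm
  intro i
  rw [← hs, all i i.2, ← all s s.2]

theorem psub_unit {n : ℕ} {L : Matrix (Fin n) (Fin n) ℝ} (hL : IsPathLaplacian L)
    (p : Fin n → Prop) [DecidablePred p] (s : Fin n) (hs : ¬ p s) :
    IsUnit (psub L p).det := by
  rw [← Matrix.isUnit_iff_isUnit_det, ← Matrix.mulVec_injective_iff_isUnit]
  intro u v huv
  have hx : psub L p *ᵥ (u - v) = 0 := by
    rw [Matrix.mulVec_sub]; exact sub_eq_zero.2 huv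
  set x := u - v with hxd
  let y : Fin n → ℝ := fun i => if h : p i then x ⟨i, h⟩ else 0
  have hsum : ∀ i, ∑ j, L i j * y j = ∑ j : {j // p j}, L i j * x j := by
    intro i
    rw [← Fintype.sum_subtype_add_sum_subtype p]
    have a1 : ∑ j : {j // ¬ p j}, L i j * y j = 0 :=
      Finset.sum_eq_zero fun j _ => by simp [y, j.2]
    rw [a1, add_zero]
    exact Finset.sum_congr rfl fun j _ => by simp [y, j.2]
  have hy := quad hL y (Finset.sum_eq_zero fun i _ => by
    by_cases h : p i
    · rw [hsum]
      have := congrFun hx ⟨i, h⟩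
      have e : ∑ j : {j // p j}, L i j * x j = 0 := this
      rw [e, mul_zero]
    · simp [y, h]) s (by simp [y, hs])
  have hx0 : x = 0 := by
    funext i
    have := hy i
    simpa [y, i.2] using this
  exact sub_eq_zero.1 hx0

theorem inv_entry {n : ℕ} {L : Matrix (Fin n) (Fin n) ℝ}
    (p q : Fin n → Prop) [DecidablePred p] [DecidablePred q] (hq : IsUnit (psub L q).det)
    (hpq : ∀ i, p i → q i) (hz : ∀ i j, p i → q j → ¬ p j → L i j = 0)
    (i : Fin n) (hi : p i) :
    (psub L p)⁻¹ ⟨i, hi⟩ ⟨i, hi⟩ = (psub L q)⁻¹ ⟨i, hpq i hi⟩ ⟨i, hpq i hi⟩ := by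
  let f : {i // p i} → {i // q i} := fun i => ⟨i.1, hpq _ i.2⟩
  have key : psub L p * ((psub L q)⁻¹).submatrix f f = 1 := by
    ext a b
    have h1 := congrFun (congrFun (Matrix.mul_nonsing_inv _ hq) (f a)) (f b)
    have h2 : (1 : Matrix {i // q i} {i // q i} ℝ) (f a) (f b)
        = (1 : Matrix {i // p i} {i // p i} ℝ) a b := by
      simp [Matrix.one_apply, f, Subtype.ext_iff]
    rw [← h2, ← h1, Matrix.mul_apply, Matrix.mul_apply]
    let G : Fin n → ℝ := fun j => if h : q j then L a j * (psub L q)⁻¹ ⟨j, h⟩ (f b) else 0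
    have g1 : ∑ j : {j // q j}, psub L q (f a) j * (psub L q)⁻¹ j (f b) = ∑ j, G j := by
      rw [← Fintype.sum_subtype_add_sum_subtype q]
      have a1 : ∑ j : {j // ¬ q j}, G j = 0 :=
        Finset.sum_eq_zero fun j _ => by simp [G, j.2]
      rw [a1, add_zero]
      exact Finset.sum_congr rfl fun j _ => by simp [G, j.2, psub, f]
    rw [g1, ← Fintype.sum_subtype_add_sum_subtype p]
    have a1 : ∑ j : {j // ¬ p j}, G j = 0 :=
      Finset.sum_eq_zero fun j _ => by
        by_cases h : q j
        · simp [G, hz a j a.2 h j.2]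
        · simp [G, h]
    rw [a1, add_zero]
    exact Finset.sum_congr rfl fun j _ => by simp [G, hpq j j.2, psub, f]
  rw [Matrix.inv_eq_right_inv key]
  rfl

theorem trace_eq {n : ℕ} {L : Matrix (Fin n) (Fin n) ℝ}
    (p q : Fin n → Prop) [DecidablePred p] [DecidablePred q] (hq : IsUnit (psub L q).det)
    (hpq : ∀ i, p i → q i) (hz : ∀ i j, p i → q j → ¬ p j → L i j = 0) :
    ((psub L p)⁻¹).trace = ∑ i, if p i then
      (if h : q i then (psub L q)⁻¹ ⟨i, h⟩ ⟨i, h⟩ else 0) else 0 := by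
  rw [← Fintype.sum_subtype_add_sum_subtype p]
  have a1 : ∑ j : {j // ¬ p j}, (if p j then
      (if h : q j then (psub L q)⁻¹ ⟨j, h⟩ ⟨j, h⟩ else 0) else 0) = 0 :=
    Finset.sum_eq_zero fun j _ => by simp [j.2]
  rw [a1, add_zero, Matrix.trace]
  refine Finset.sum_congr rfl fun j _ => ?_
  rw [if_pos j.2, dif_pos (hpq j j.2)]
  exact inv_entry p q hq hpq hz j j.2

theorem ite_aux (a b d x : ℕ) (c : ℝ) (h1 : a ≤ b) (h2 : b < d) (hx : b = x → c = 0) :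
    (if a < x ∧ x < b then c else 0) + (if b < x ∧ x < d then c else 0) =
      if a < x ∧ x < d then c else 0 := by
  by_cases h : b = x
  · simp [hx h]
  · by_cases p3 : a < x ∧ x < d
    · rw [if_pos p3]
      by_cases p1 : x < b
      · rw [if_pos (by omega), if_neg (by omega), add_zero]
      · rw [if_neg (by omega), if_pos (by omega), zero_add]
    · rw [if_neg p3, if_neg (by omega), if_neg (by omega), add_zero]

theorem ind_sum (k : ℕ) (ℓ : Fin (k + 1) → ℕ) (hm : StrictMono ℓ) (x : ℕ) (c : ℝ)
    (hc : ∀ i, ℓ i = x → c = 0) :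
    ∑ i : Fin k, (if ℓ i.castSucc < x ∧ x < ℓ i.succ then c else 0) =
      if ℓ 0 < x ∧ x < ℓ (Fin.last k) then c else 0 := by
  induction k with
  | zero =>
    simp
    intro h1 h2; omega
  | succ k ih =>
    rw [Fin.sum_univ_castSucc]
    have := ih (fun i => ℓ i.castSucc) (fun a b h => hm (by simpa using h))
      (fun i h => hc _ h)
    simp only [Fin.succ_castSucc] at this ⊢
    rw [this]
    have h1 : ℓ 0 ≤ ℓ (Fin.last k).castSucc := hm.monotone (Fin.zero_le _)
    have h2 : ℓ (Fin.last k).castSucc < ℓ (Fin.last k).succ := hm (Fin.castSucc_lt_succ)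
    have h3 := hc (Fin.last k).castSucc
    exact ite_aux _ _ _ _ _ h1 h2 h3

end PathAux

open PathAux

/-- for a weighted path Laplacian and a nonempty leader set
`S = {ℓ₀ < ℓ₁ < ⋯ < ℓ_k}` (so `k + 1 ≥ 1` leaders), the grounded Laplacian and all segment
submatrices are invertible and `(1/2)·tr(L_ff⁻¹)` splits as the sum of the segment
contributions. -/
theorem path_coherence_decomposition {n k : ℕ} (hn : 1 ≤ n)
    (L : Matrix (Fin n) (Fin n) ℝ) (hL : IsPathLaplacian L)
    (ℓ : Fin (k + 1) → Fin n) (hmono : StrictMono ℓ) :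
    IsUnit (grounded L (Finset.image ℓ Finset.univ)).det ∧
    IsUnit (pseg L 0 ((ℓ 0 : ℕ) + 1)).det ∧
    (∀ i : Fin k, IsUnit (pseg L ((ℓ i.castSucc : ℕ) + 1) ((ℓ i.succ : ℕ) + 1)).det) ∧
    IsUnit (pseg L ((ℓ (Fin.last k) : ℕ) + 1) (n + 1)).det ∧
    (1 / 2) * ((grounded L (Finset.image ℓ Finset.univ))⁻¹).trace =
      (1 / 2) * ((pseg L 0 ((ℓ 0 : ℕ) + 1))⁻¹).trace
      + (1 / 2) * ∑ i : Fin k,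
          ((pseg L ((ℓ i.castSucc : ℕ) + 1) ((ℓ i.succ : ℕ) + 1))⁻¹).trace
      + (1 / 2) * ((pseg L ((ℓ (Fin.last k) : ℕ) + 1) (n + 1))⁻¹).trace := by
  classical
  set q : Fin n → Prop := fun i => i ∉ Finset.image ℓ Finset.univ with hqd
  have hqi : ∀ i, q i ↔ ∀ t, ℓ t ≠ i := by intro i; simp [q]
  have hgq : grounded L (Finset.image ℓ Finset.univ) = psub L q := rfl
  have hsg : ∀ a b, pseg L a b = psub L (fun j => a < (j : ℕ) + 1 ∧ (j : ℕ) + 1 < b) :=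
    fun _ _ => rfl
  have hq : IsUnit (psub L q).det := psub_unit hL q (ℓ 0) (by simp [q])
  have hle0 : ∀ t, (ℓ 0 : ℕ) ≤ ℓ t := fun t => hmono.monotone (Fin.zero_le t)
  have hlel : ∀ t, (ℓ t : ℕ) ≤ ℓ (Fin.last k) := fun t => hmono.monotone (Fin.le_last t)
  have hcons : ∀ (i : Fin k) t, (ℓ t : ℕ) ≤ ℓ i.castSucc ∨ (ℓ i.succ : ℕ) ≤ ℓ t := by
    intro i t
    rcases le_or_gt t i.castSucc with h | h
    · exact Or.inl (hmono.monotone h)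
    · exact Or.inr (hmono.monotone (Fin.castSucc_lt_iff_succ_le.1 h))
  have hne : ∀ j, q j → ∀ t, (ℓ t : ℕ) ≠ j := fun j hj t h => (hqi j).1 hj t (Fin.ext h)
  refine ⟨by convert hq, ?_, ?_, ?_, ?_⟩
  · rw [hsg]; convert psub_unit hL _ (ℓ 0) ?_; omega
  · intro i; rw [hsg]; convert psub_unit hL _ (ℓ i.castSucc) ?_; omega
  · rw [hsg]; convert psub_unit hL _ (ℓ (Fin.last k)) ?_; omega
  have t0 := trace_eq (L := L) (fun j => 0 < (j : ℕ) + 1 ∧ (j : ℕ) + 1 < (ℓ 0 : ℕ) + 1) q hq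
    (by
      intro i hi
      rw [hqi]; rintro t rfl
      have := hle0 t; omega)
    (by
      intro i j hi hj hpj
      apply far_zero hL
      have := hne j hj 0
      omega)
  have tl := trace_eq (L := L)
    (fun j => (ℓ (Fin.last k) : ℕ) + 1 < (j : ℕ) + 1 ∧ (j : ℕ) + 1 < n + 1) q hq
    (by
      intro i hi
      rw [hqi]; rintro t rfl
      have := hlel t; omega)
    (by
      intro i j hi hj hpj
      apply far_zero hL
      have := hne j hj (Fin.last k)
      have := j.2
      omega)
  have ti : ∀ i : Fin k, _ := fun i => trace_eq (L := L)
    (fun j => (ℓ i.castSucc : ℕ) + 1 < (j : ℕ) + 1 ∧ (j : ℕ) + 1 < (ℓ i.succ : ℕ) + 1) q hq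
    (by
      intro j hj
      rw [hqi]; rintro t rfl
      have := hcons i t; omega)
    (by
      intro a j hi hj hpj
      apply far_zero hL
      have := hne j hj i.castSucc
      have := hne j hj i.succ
      omega)
  have tq := trace_eq (L := L) q q hq (fun _ h => h) (fun i j _ h h' => absurd h h')
  set F : Fin n → ℝ := fun i => if h : q i then (psub L q)⁻¹ ⟨i, h⟩ ⟨i, h⟩ else 0 with hF
  have main : ((psub L q)⁻¹).trace =
      ((pseg L 0 ((ℓ 0 : ℕ) + 1))⁻¹).trace
      + ∑ i : Fin k, ((pseg L ((ℓ i.castSucc : ℕ) + 1) ((ℓ i.succ : ℕ) + 1))⁻¹).trace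
      + ((pseg L ((ℓ (Fin.last k) : ℕ) + 1) (n + 1))⁻¹).trace := by
    have r0 : ((pseg L 0 ((ℓ 0 : ℕ) + 1))⁻¹).trace =
        ∑ x : Fin n, if 0 < (x : ℕ) + 1 ∧ (x : ℕ) + 1 < (ℓ 0 : ℕ) + 1 then F x else 0 := by
      rw [hsg]; convert t0
    have rl : ((pseg L ((ℓ (Fin.last k) : ℕ) + 1) (n + 1))⁻¹).trace =
        ∑ x : Fin n, if (ℓ (Fin.last k) : ℕ) + 1 < (x : ℕ) + 1 ∧ (x : ℕ) + 1 < n + 1 then F x else 0 := by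
      rw [hsg]; convert tl
    have ri : ∀ i : Fin k,
        ((pseg L ((ℓ i.castSucc : ℕ) + 1) ((ℓ i.succ : ℕ) + 1))⁻¹).trace =
        ∑ x : Fin n, if (ℓ i.castSucc : ℕ) + 1 < (x : ℕ) + 1 ∧ (x : ℕ) + 1 < (ℓ i.succ : ℕ) + 1
          then F x else 0 := by
      intro i; rw [hsg]; convert ti i
    rw [tq, r0, rl, Finset.sum_congr rfl (fun i _ => ri i), Finset.sum_comm,
      ← Finset.sum_add_distrib, ← Finset.sum_add_distrib]
    refine Finset.sum_congr rfl fun x _ => ?_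
    change (if q x then F x else 0) = _
    have is := ind_sum k (fun t => (ℓ t : ℕ) + 1)
      (fun a b h => by have : (ℓ a : ℕ) < ℓ b := hmono h
                       simpa using this) ((x : ℕ) + 1) (F x)
      (by
        intro t ht
        have : ¬ q x := fun h => hne x h t (by simpa using ht)
        simp [F, this])
    beta_reduce at is
    rw [is]
    by_cases hx : q x
    · have h1 := hne x hx 0
      have h2 := hne x hx (Fin.last k)
      have h3 := hle0 (Fin.last k)
      have h4 := x.2
      rw [if_pos hx]
      split_ifs <;> first | (exfalso; omega) | simp
    · have : F x = 0 := by simp [F, hx]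
      simp [this]
  have hg : ((grounded L (Finset.image ℓ Finset.univ))⁻¹).trace = ((psub L q)⁻¹).trace := by
    rw [hgq]
  rw [hg, main]
  ring
end

section
/- Let n ≥ 1, let L be a weighted Laplacian of a path graph on n vertices, and let 1 ≤ k ≤ n. Then the minimum over all nonempty subsets S ⊆ {1,…,n} with |S| ≤ k of (1/2)·tr(L_ff⁻¹) equals the minimum over all j ∈ {1,…,k} and all increasing sequences 1 ≤ ℓ₁ < ℓ₂ < ⋯ < ℓ_j ≤ n of the quantity (1/2)·[tr(L_{(0→ℓ₁)}⁻¹) + Σ_{i=1}^{j−1} tr(L_{(ℓ_i→ℓ_{i+1})}⁻¹) + tr(L_{(ℓ_j→n+1)}⁻¹)]. -/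
open Matrix

noncomputable def ptr {n : ℕ} (L : Matrix (Fin n) (Fin n) ℝ) (p : Fin n → Prop) [DecidablePred p] : ℝ :=
  ((L.submatrix (fun x : {i // p i} => x.val) (fun x : {i // p i} => x.val))⁻¹).trace

lemma ptr_congr {n : ℕ} (L : Matrix (Fin n) (Fin n) ℝ) (p q : Fin n → Prop) [hp : DecidablePred p]
    [hq : DecidablePred q] (h : ∀ i, p i ↔ q i) : ptr L p = ptr L q := by
  obtain rfl : p = q := funext fun i => propext (h i)
  obtain rfl : hp = hq := Subsingleton.elim _ _
  rfl

lemma quad_eq {n : ℕ} (L : Matrix (Fin n) (Fin n) ℝ) (hL : IsPathLaplacian L) (v : Fin n → ℝ) :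
    ∑ i, ∑ j, L i j * (v i - v j)^2 = -2 * ∑ i, v i * ∑ j, L i j * v j := by
  obtain ⟨hs, -, -, hr⟩ := hL
  have h1 : ∑ i, ∑ j, L i j * (v i)^2 = 0 := by
    apply Finset.sum_eq_zero
    intro i _
    rw [← Finset.sum_mul, hr, zero_mul]
  have h2 : ∑ i, ∑ j, L i j * (v j)^2 = 0 := by
    rw [Finset.sum_comm, ← h1]
    refine Finset.sum_congr rfl fun i _ => Finset.sum_congr rfl fun j _ => ?_
    rw [hs.apply]
  have h3 : ∀ i j, L i j * (v i - v j)^2 =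
      L i j * (v i)^2 + L i j * (v j)^2 + -2 * (v i * (L i j * v j)) := by
    intro i j; ring
  simp only [h3, Finset.sum_add_distrib, h1, h2, ← Finset.mul_sum]
  ring

lemma zero_of_quad {n : ℕ} (L : Matrix (Fin n) (Fin n) ℝ) (hL : IsPathLaplacian L) (v : Fin n → ℝ)
    (h : ∑ i, v i * ∑ j, L i j * v j = 0) (c : Fin n) (hc : v c = 0) : v = 0 := by
  have hq := quad_eq L hL v
  rw [h, mul_zero] at hq
  obtain ⟨hs, hneg, hz, hr⟩ := hL
  have hnp : ∀ i j, L i j * (v i - v j)^2 ≤ 0 := by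
    intro i j
    rcases lt_trichotomy (i : ℕ) j with hij | hij | hij
    · rcases Nat.lt_or_ge (i + 1 : ℕ) j with h' | h'
      · rw [hz i j h', zero_mul]
      · exact mul_nonpos_of_nonpos_of_nonneg (hneg i j (by omega)).le (sq_nonneg _)
    · rw [Fin.ext hij]; simp
    · rw [← hs.apply]
      rcases Nat.lt_or_ge (j + 1 : ℕ) i with h' | h'
      · rw [hz j i h', zero_mul]
      · exact mul_nonpos_of_nonpos_of_nonneg (hneg j i (by omega)).le (sq_nonneg _)
  have hadj : ∀ i j : Fin n, (i : ℕ) + 1 = j → v i = v j := by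
    intro i j hij
    have h1 := (Finset.sum_eq_zero_iff_of_nonpos
      (fun i _ => Finset.sum_nonpos (fun j _ => hnp i j))).1 hq i (Finset.mem_univ _)
    have h2 := (Finset.sum_eq_zero_iff_of_nonpos (fun j _ => hnp i j)).1 h1 j (Finset.mem_univ _)
    rcases mul_eq_zero.1 h2 with h3 | h3
    · exact absurd h3 (hneg i j hij).ne
    · exact sub_eq_zero.1 (pow_eq_zero_iff (two_ne_zero) |>.1 h3)
  have h0 : ∀ m : ℕ, ∀ hm : m < n, v ⟨m, hm⟩ = v ⟨0, by omega⟩ := by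
    intro m
    induction m with
    | zero => intro _; rfl
    | succ m ih => intro hm; rw [← ih (by omega)]; exact (hadj _ _ rfl).symm
  funext i
  rw [Pi.zero_apply, ← hc]
  exact (h0 i i.2).trans (h0 c c.2).symm

lemma unit_sub {n : ℕ} (L : Matrix (Fin n) (Fin n) ℝ) (hL : IsPathLaplacian L)
    (p : Fin n → Prop) [DecidablePred p] (c : Fin n) (hc : ¬ p c) :
    IsUnit (L.submatrix (fun x : {i // p i} => x.val) (fun x : {i // p i} => x.val)) := by
  rw [Matrix.isUnit_iff_isUnit_det, isUnit_iff_ne_zero]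
  intro hdet
  obtain ⟨x, hx, hx0⟩ := Matrix.exists_mulVec_eq_zero_iff.2 hdet
  apply hx
  let v : Fin n → ℝ := fun i => if h : p i then x ⟨i, h⟩ else 0
  have hvx : ∀ y : {i // p i}, v y.1 = x y := fun y => by simp [v, y.2]
  have hsum : ∀ i, ∑ j, L i j * v j = ∑ y : {i // p i}, L i y.1 * x y := by
    intro i
    simp only [← hvx]
    rw [← Finset.sum_subtype (Finset.univ.filter p) (by simp) (fun j => L i j * v j)]
    symm
    apply Finset.sum_filter_of_ne
    intro j _ hj
    by_contra hp
    exact hj (by simp [v, hp])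
  have hv : v = 0 := by
    apply zero_of_quad L hL v _ c (by simp [v, hc])
    apply Finset.sum_eq_zero
    intro i _
    by_cases hi : p i
    · have := congrFun hx0 ⟨i, hi⟩
      rw [hsum]
      simp only [Matrix.mulVec, dotProduct, Matrix.submatrix_apply, Pi.zero_apply] at this
      rw [this, mul_zero]
    · simp [v, hi]
  funext y
  rw [← hvx, hv]; rfl

lemma ptr_split {n : ℕ} (L : Matrix (Fin n) (Fin n) ℝ) (hL : IsPathLaplacian L)
    (p q r : Fin n → Prop) [DecidablePred p] [DecidablePred q] [DecidablePred r]
    (c : Fin n) (hc : ¬ p c) (hq : ∀ i, q i ↔ p i ∧ i < c) (hr : ∀ i, r i ↔ p i ∧ c < i) :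
    ptr L p = ptr L q + ptr L r := by
  have hq' : ¬ q c := by simp [hq]
  have hr' : ¬ r c := by simp [hr]
  let f : {i // q i} ⊕ {i // r i} → {i // p i} :=
    Sum.elim (fun x => ⟨x.1, ((hq _).1 x.2).1⟩) (fun x => ⟨x.1, ((hr _).1 x.2).1⟩)
  have hf : Function.Bijective f := by
    constructor
    · rintro (⟨x, hx⟩ | ⟨x, hx⟩) (⟨y, hy⟩ | ⟨y, hy⟩) h <;> simp [f] at h <;> subst h
      · rfl
      · exact absurd ((hq _).1 hx).2 (not_lt.2 ((hr _).1 hy).2.le)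
      · exact absurd ((hq _).1 hy).2 (not_lt.2 ((hr _).1 hx).2.le)
      · rfl
    · rintro ⟨x, hx⟩
      rcases lt_trichotomy x c with h | h | h
      · exact ⟨Sum.inl ⟨x, (hq _).2 ⟨hx, h⟩⟩, rfl⟩
      · subst h; exact absurd hx hc
      · exact ⟨Sum.inr ⟨x, (hr _).2 ⟨hx, h⟩⟩, rfl⟩
  let e := Equiv.ofBijective f hf
  have hz : ∀ i j, q i → r j → L i j = 0 := by
    intro i j hi hj
    have h1 := ((hq _).1 hi).2
    have h2 := ((hr _).1 hj).2
    exact hL.2.2.1 i j (by rw [Fin.lt_def] at h1 h2; omega)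
  have hM : (L.submatrix (fun x : {i // p i} => x.val) (fun x : {i // p i} => x.val)).submatrix e e
      = Matrix.fromBlocks
        (L.submatrix (fun x : {i // q i} => x.val) (fun x : {i // q i} => x.val)) 0 0
        (L.submatrix (fun x : {i // r i} => x.val) (fun x : {i // r i} => x.val)) := by
    ext (⟨x, hx⟩ | ⟨x, hx⟩) (⟨y, hy⟩ | ⟨y, hy⟩)
    · rfl
    · exact hz x y hx hy
    · exact (hL.1.apply _ _).trans (hz y x hy hx)
    · rfl
  have ht : ∀ M : Matrix {i // p i} {i // p i} ℝ, (M.submatrix e e).trace = M.trace := by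
    intro M
    exact Equiv.sum_comp e (fun i => M i i)
  unfold ptr
  rw [← ht, ← Matrix.inv_submatrix_equiv, hM, Matrix.inv_fromBlocks_zero₂₁_of_isUnit_iff _ _ _
    (iff_of_true (unit_sub L hL q c hq') (unit_sub L hL r c hr'))]
  simp [Matrix.trace, Fintype.sum_sum_type]

lemma seg_formula {n : ℕ} (L : Matrix (Fin n) (Fin n) ℝ) (hL : IsPathLaplacian L) :
    ∀ (j : ℕ) (ℓ : Fin (j + 1) → Fin n), StrictMono ℓ → ∀ b : ℕ, (ℓ (Fin.last j) : ℕ) + 1 ≤ b →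
      ptr L (fun i => (∀ m, ℓ m ≠ i) ∧ (i : ℕ) + 1 < b) =
        ((pseg L 0 ((ℓ 0 : ℕ) + 1))⁻¹).trace
          + ∑ i : Fin j, ((pseg L ((ℓ i.castSucc : ℕ) + 1) ((ℓ i.succ : ℕ) + 1))⁻¹).trace
          + ((pseg L ((ℓ (Fin.last j) : ℕ) + 1) b)⁻¹).trace := by
  intro j
  induction j with
  | zero =>
    intro ℓ _ b hb
    simp only [Finset.univ_eq_empty, Finset.sum_empty, add_zero]
    refine ptr_split L hL _ _ _ (ℓ 0) (by simp) ?_ ?_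
    · intro i
      have hall : (∀ m, ℓ m ≠ i) ↔ ℓ 0 ≠ i :=
        ⟨fun h => h 0, fun h m => by rwa [show m = 0 from Fin.ext (by simp)]⟩
      have hl0 : ℓ (Fin.last 0) = ℓ 0 := rfl
      rw [hall]
      simp only [hl0, Fin.lt_def, Fin.ext_iff, ne_eq] at hb ⊢
      have hb' : (ℓ 0 : ℕ) + 1 ≤ b := hb
      omega
    · intro i
      have hall : (∀ m, ℓ m ≠ i) ↔ ℓ 0 ≠ i :=
        ⟨fun h => h 0, fun h m => by rwa [show m = 0 from Fin.ext (by simp)]⟩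
      have hl0 : ℓ (Fin.last 0) = ℓ 0 := rfl
      rw [hall]
      simp only [hl0, Fin.lt_def, Fin.ext_iff, ne_eq] at hb ⊢
      have hb' : (ℓ 0 : ℕ) + 1 ≤ b := hb
      omega
  | succ j ih =>
    intro ℓ hℓ b hb
    have hlt : ∀ m : Fin (j+1), ℓ m.castSucc < ℓ (Fin.last (j+1)) := fun m =>
      hℓ (Fin.castSucc_lt_last m)
    have := ih (fun m => ℓ m.castSucc) (fun x y h => hℓ (Fin.castSucc_lt_castSucc_iff.2 h))
      ((ℓ (Fin.last (j+1)) : ℕ) + 1) (by have := hlt (Fin.last j); rw [Fin.lt_def] at this; omega)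
    rw [Fin.sum_univ_castSucc, ← add_assoc]
    simp only [Fin.succ_last, Fin.castSucc_zero, Fin.succ_castSucc] at this ⊢
    erw [← this]
    refine ptr_split L hL _ _ _ (ℓ (Fin.last (j+1))) (by simp) ?_ ?_
    · intro i
      rw [Fin.forall_fin_succ' (n := j+1)]
      simp only [Fin.lt_def, ne_eq, Fin.ext_iff] at hb ⊢
      constructor
      · rintro ⟨h1, h2⟩; exact ⟨⟨⟨h1, by omega⟩, by omega⟩, by omega⟩
      · rintro ⟨⟨⟨h1, _⟩, _⟩, h2⟩; exact ⟨h1, by omega⟩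
    · intro i
      rw [Fin.forall_fin_succ' (n := j+1)]
      simp only [Fin.lt_def, ne_eq, Fin.ext_iff] at hb hlt ⊢
      constructor
      · rintro ⟨h1, h2⟩
        exact ⟨⟨⟨fun m => by have := hlt m; omega, by omega⟩, by omega⟩, by omega⟩
      · rintro ⟨⟨⟨h1, _⟩, _⟩, h2⟩; exact ⟨by omega, by omega⟩

lemma grounded_formula {n : ℕ} (L : Matrix (Fin n) (Fin n) ℝ) (hL : IsPathLaplacian L)
    (j : ℕ) (ℓ : Fin (j + 1) → Fin n) (hℓ : StrictMono ℓ) (S : Finset (Fin n))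
    (hS : ∀ i, i ∈ S ↔ ∃ m, ℓ m = i) :
      ((grounded L S)⁻¹).trace =
        ((pseg L 0 ((ℓ 0 : ℕ) + 1))⁻¹).trace
          + ∑ i : Fin j, ((pseg L ((ℓ i.castSucc : ℕ) + 1) ((ℓ i.succ : ℕ) + 1))⁻¹).trace
          + ((pseg L ((ℓ (Fin.last j) : ℕ) + 1) (n + 1))⁻¹).trace := by
  rw [← seg_formula L hL j ℓ hℓ (n+1) (by have := (ℓ (Fin.last j)).2; omega)]
  refine ptr_congr L (fun i => i ∉ S) _ ?_
  intro i
  simp [hS]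

/-- for a weighted path Laplacian and `1 ≤ k ≤ n`, the minimum of
`(1/2)·tr(L_ff⁻¹)` over all nonempty leader sets `S` with `|S| ≤ k` equals the minimum
over all `j ∈ {1,…,k}` (written `j'+1` with `j'+1 ≤ k`) and all increasing sequences
`ℓ₀ < ⋯ < ℓ_{j'}` of the segment-sum formula. -/
theorem path_coherence_leader_selection {n k : ℕ} (hn : 1 ≤ n) (hk1 : 1 ≤ k) (hkn : k ≤ n)
    (L : Matrix (Fin n) (Fin n) ℝ) (hL : IsPathLaplacian L) :
    sInf { x : ℝ | ∃ S : Finset (Fin n), S.Nonempty ∧ S.card ≤ k ∧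
        x = (1 / 2) * ((grounded L S)⁻¹).trace } =
    sInf { x : ℝ | ∃ j : ℕ, j + 1 ≤ k ∧ ∃ ℓ : Fin (j + 1) → Fin n, StrictMono ℓ ∧
        x = (1 / 2) * ( ((pseg L 0 ((ℓ 0 : ℕ) + 1))⁻¹).trace
          + ∑ i : Fin j, ((pseg L ((ℓ i.castSucc : ℕ) + 1) ((ℓ i.succ : ℕ) + 1))⁻¹).trace
          + ((pseg L ((ℓ (Fin.last j) : ℕ) + 1) (n + 1))⁻¹).trace ) } := by
  congr 1
  ext x
  constructor
  · rintro ⟨S, hne, hcard, rfl⟩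
    obtain ⟨j, hj⟩ : ∃ j, S.card = j + 1 := ⟨S.card - 1, by have := hne.card_pos; omega⟩
    refine ⟨j, by omega, S.orderEmbOfFin hj, (S.orderEmbOfFin hj).strictMono, ?_⟩
    rw [grounded_formula L hL j _ (S.orderEmbOfFin hj).strictMono S]
    intro i
    have := Finset.range_orderEmbOfFin S hj
    rw [← Finset.mem_coe, ← this]; rfl
  · rintro ⟨j, hj, ℓ, hℓ, rfl⟩
    refine ⟨Finset.univ.image ℓ, by simp, ?_, ?_⟩
    · rw [Finset.card_image_of_injective _ hℓ.injective]; simpa using hj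
    · rw [grounded_formula L hL j ℓ hℓ]
      simp
end

section
/- Let V be a finite nonempty type, s ∈ V, and w : V → V → [0,∞] an extended-nonnegative-real edge-weight function. Define d : ℕ → V → [0,∞] by d(0)(v) = 0 if v = s and d(0)(v) = ∞ otherwise, and d(m+1)(v) = min over u ∈ V of (d(m)(u) + w(u,v)). Then for every H ∈ ℕ and every v ∈ V, the minimum over 0 ≤ m ≤ H of d(m)(v) equals the infimum over all walks from s to v having at most H edges of the walk's total weight. -/
open scoped ENNReal

/-- correctness of the modified Bellman–Ford algorithm for minimum-weight
walks with at most `H` edges. With `d 0 v = 0` if `v = s` and `∞` otherwise, and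
`d (m+1) v = min_u (d m u + w u v)`, the minimum of `d m v` over `0 ≤ m ≤ H` equals the
infimum of the total weight over all walks from `s` to `v` with at most `H` edges. -/
theorem bellmanFord_bounded_correct {V : Type*} [Fintype V] [DecidableEq V] [Nonempty V]
    (s : V) (w : V → V → ℝ≥0∞) (d : ℕ → V → ℝ≥0∞)
    (h0 : ∀ v : V, d 0 v = if v = s then 0 else ∞)
    (hstep : ∀ (m : ℕ) (v : V), d (m + 1) v = ⨅ u : V, (d m u + w u v)) :
    ∀ (H : ℕ) (v : V),
      (⨅ m ∈ Finset.range (H + 1), d m v) =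
        sInf { x : ℝ≥0∞ | ∃ m : ℕ, m ≤ H ∧ ∃ p : Fin (m + 1) → V,
          p 0 = s ∧ p (Fin.last m) = v ∧
          x = ∑ i : Fin m, w (p i.castSucc) (p i.succ) } := by
  intro H v
  have lower : ∀ (m : ℕ) (p : Fin (m + 1) → V), p 0 = s →
      d m (p (Fin.last m)) ≤ ∑ i : Fin m, w (p i.castSucc) (p i.succ) := by
    intro m
    induction m with
    | zero =>
      intro p hp
      have : p (Fin.last 0) = s := hp
      rw [this, h0, if_pos rfl]
      exact zero_le
    | succ m ih =>
      intro p hp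
      rw [hstep, Fin.sum_univ_castSucc]
      refine (iInf_le _ (p (Fin.last m).castSucc)).trans ?_
      have := ih (fun i => p i.castSucc) hp
      exact add_le_add this le_rfl
  have upper : ∀ (m : ℕ) (v : V), d m v = ∞ ∨ ∃ p : Fin (m + 1) → V,
      p 0 = s ∧ p (Fin.last m) = v ∧
      d m v = ∑ i : Fin m, w (p i.castSucc) (p i.succ) := by
    intro m
    induction m with
    | zero =>
      intro v
      by_cases hv : v = s
      · exact Or.inr ⟨fun _ => s, rfl, hv.symm, by simp [h0, hv]⟩
      · left
        simp [h0, hv]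
    | succ m ih =>
      intro v
      obtain ⟨u, hu⟩ := exists_eq_ciInf_of_finite (f := fun u : V => d m u + w u v)
      rw [← hstep] at hu
      rcases ih u with h | ⟨p, hp0, hpl, hp⟩
      · left
        rw [← hu]
        simp [h]
      · right
        refine ⟨Fin.snoc (α := fun _ => V) p v, ?_, ?_, ?_⟩
        · rw [← Fin.castSucc_zero, Fin.snoc_castSucc, hp0]
        · rw [Fin.snoc_last]
        · rw [← hu, Fin.sum_univ_castSucc]
          simp only [Fin.succ_last, Fin.snoc_last, Fin.snoc_castSucc, hpl, hp,
            Fin.succ_castSucc]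
  apply le_antisymm
  · apply le_sInf
    rintro x ⟨m, hm, p, hp0, hpl, rfl⟩
    refine (iInf₂_le m (Finset.mem_range.2 (by omega))).trans ?_
    rw [← hpl]
    exact lower m p hp0
  · refine le_iInf₂ fun m hm => ?_
    rcases upper m v with h | ⟨p, hp0, hpl, hp⟩
    · rw [h]
      exact le_top
    · exact sInf_le ⟨m, by have := Finset.mem_range.1 hm; omega, p, hp0, hpl, hp⟩
end

section
/- Let V be a finite nonempty type, s ∈ V, and w : V → V → [0,∞] an extended-nonnegative-real edge-weight function. Define d : ℕ → V → [0,∞] by d(0)(v) = ∞ if v = s and d(0)(v) = 0 otherwise, and d(m+1)(v) = max over u ∈ V of min(d(m)(u), w(u,v)). Then for every m ∈ ℕ and every v ∈ V, d(m)(v) equals the supremum over all walks p : {0,1,…,m} → V with p(0) = s and p(m) = v of the bottleneck weight min_{0 ≤ i ≤ m−1} w(p(i), p(i+1)), where the bottleneck weight of the length-0 walk is ∞. -/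
open scoped ENNReal

/-- correctness of the widest-path (max–min) Bellman–Ford dynamic program.
`d 0 v = ∞` if `v = s` and `0` otherwise; `d (m+1) v = max_u min (d m u) (w u v)`.
Then `d m v` is the supremum, over walks `p : Fin (m+1) → V` from `s` to `v`, of the
bottleneck weight `min_{i<m} w (p i) (p (i+1))` (which is `∞` for the length-0 walk). -/
theorem bellmanFord_widest_correct {V : Type*} [Fintype V] [DecidableEq V] [Nonempty V]
    (s : V) (w : V → V → ℝ≥0∞) (d : ℕ → V → ℝ≥0∞)
    (h0 : ∀ v : V, d 0 v = if v = s then ∞ else 0)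
    (hstep : ∀ (m : ℕ) (v : V), d (m + 1) v = ⨆ u : V, min (d m u) (w u v)) :
    ∀ (m : ℕ) (v : V),
      d m v = ⨆ p : {p : Fin (m + 1) → V // p 0 = s ∧ p (Fin.last m) = v},
        ⨅ i : Fin m, w (p.val i.castSucc) (p.val i.succ) := by
  intro m
  induction m with
  | zero =>
    intro v
    rw [h0]
    split_ifs with h
    · subst h
      symm
      rw [eq_top_iff]
      refine le_iSup_of_le ⟨fun _ => v, rfl, rfl⟩ ?_
      simp
    · symm
      refine le_antisymm ?_ zero_le
      refine iSup_le ?_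
      rintro ⟨p, hp0, hp1⟩
      exact absurd (hp1.symm.trans hp0) h
  | succ m ih =>
    intro v
    rw [hstep]
    apply le_antisymm
    · refine iSup_le fun u => ?_
      rw [ih]
      change (iSup _) ⊓ _ ≤ _
      rw [iSup_inf_eq]
      refine iSup_le ?_
      rintro ⟨p, hp0, hp1⟩
      refine le_iSup_of_le ⟨Fin.snoc (α := fun _ => V) p v, ?_, ?_⟩ ?_
      · rw [← hp0, ← Fin.castSucc_zero, Fin.snoc_castSucc]
      · simp
      · refine le_iInf fun i => ?_
        refine Fin.lastCases ?_ (fun j => ?_) i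
        · simp only [Fin.snoc_castSucc, Fin.succ_last, Fin.snoc_last, hp1]
          exact inf_le_right
        · simp only [Fin.snoc_castSucc, Fin.succ_castSucc]
          exact inf_le_left.trans (iInf_le _ j)
    · refine iSup_le ?_
      rintro ⟨p, hp0, hp1⟩
      refine le_iSup_of_le (p (Fin.last m).castSucc) (le_min ?_ ?_)
      · rw [ih]
        refine le_iSup_of_le ⟨fun i => p i.castSucc, hp0, rfl⟩ ?_
        exact le_iInf fun j => iInf_le_of_le j.castSucc le_rfl
      · refine iInf_le_of_le (Fin.last m) ?_
        simp only [Fin.succ_last, hp1]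
        exact le_rfl
end

section
/- Let L be a real symmetric n×n matrix with L_{ij} ≤ 0 for all i ≠ j and all row sums zero, such that the graph on the index set with an edge between i and j whenever L_{ij} < 0 is connected. Let S be a nonempty proper subset of the index set, let L_ff and L_fl be the corresponding blocks of L, and let λ = λ_min(L_ff) be the smallest eigenvalue of L_ff, so λ > 0. Let x̄ ∈ ℝ and let x_f : ℝ → ℝ^{complement of S} be differentiable with x_f′(t) = −L_ff·x_f(t) − L_fl·(x̄·𝟏) for all t. Then for all t ≥ 0, ‖x_f(t) − x̄·𝟏‖ ≤ exp(−λ·t)·‖x_f(0) − x̄·𝟏‖; in particular x_f(t) converges to x̄·𝟏 as t → ∞. -/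
open Matrix

lemma aux_quad {n : ℕ} (L : Matrix (Fin n) (Fin n) ℝ)
    (hsym : L.IsSymm) (hrow : ∀ i, ∑ j, L i j = 0) (w : Fin n → ℝ) :
    ∑ i, ∑ j, w i * (L i j * w j) = ∑ i, ∑ j, (-(L i j) * (w i - w j) ^ 2) / 2 := by
  have h1 : ∑ i, ∑ j, L i j * (w i)^2 = 0 := by
    apply Finset.sum_eq_zero
    intro i _
    rw [← Finset.sum_mul, hrow, zero_mul]
  have h2 : ∑ i, ∑ j, L i j * (w j)^2 = 0 := by
    rw [Finset.sum_comm]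
    apply Finset.sum_eq_zero
    intro j _
    rw [← Finset.sum_mul]
    have : ∑ i, L i j = 0 := by
      rw [← hrow j]
      exact Finset.sum_congr rfl fun i _ => hsym.apply j i
    rw [this, zero_mul]
  have h3 : ∑ i, ∑ j, (-(L i j) * (w i - w j) ^ 2) / 2
      = ∑ i, ∑ j, w i * (L i j * w j) - (∑ i, ∑ j, L i j * (w i)^2) / 2
        - (∑ i, ∑ j, L i j * (w j)^2) / 2 := by
    simp only [Finset.sum_div, ← Finset.sum_sub_distrib]
    refine Finset.sum_congr rfl fun i _ => Finset.sum_congr rfl fun j _ => ?_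
    ring
  rw [h3, h1, h2]
  ring

lemma aux_posdef {n : ℕ} (L : Matrix (Fin n) (Fin n) ℝ)
    (hsym : L.IsSymm)
    (hoff : ∀ i j, i ≠ j → L i j ≤ 0)
    (hrow : ∀ i, ∑ j, L i j = 0)
    (G : SimpleGraph (Fin n)) (hG : ∀ i j, G.Adj i j ↔ i ≠ j ∧ L i j < 0)
    (hconn : G.Connected)
    (S : Finset (Fin n)) (hne : S.Nonempty) :
    (L.submatrix (Subtype.val : {i : Fin n // i ∉ S} → Fin n)
        (Subtype.val : {i : Fin n // i ∉ S} → Fin n)).PosDef := by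
  refine Matrix.PosDef.of_dotProduct_mulVec_pos ?_ ?_
  · ext i j
    simp [hsym.apply]
  intro v hv
  set w : Fin n → ℝ := fun i => if h : i ∉ S then v ⟨i, h⟩ else 0 with hw
  have hwS : ∀ i : {i : Fin n // i ∈ S}, w i = 0 := fun i => by simp [hw, i.2]
  have hwF : ∀ i : {i : Fin n // i ∉ S}, w i = v i := fun i => by simp [hw, i.2]
  have key : star v ⬝ᵥ ((L.submatrix (Subtype.val : {i : Fin n // i ∉ S} → Fin n)
        (Subtype.val : {i : Fin n // i ∉ S} → Fin n)) *ᵥ v)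
      = ∑ i, ∑ j, w i * (L i j * w j) := by
    rw [← Fintype.sum_subtype_add_sum_subtype (fun i => i ∈ S)]
    simp only [hwS, hwF, zero_mul, Finset.sum_const_zero, zero_add]
    simp only [dotProduct, mulVec, Matrix.submatrix_apply, star_trivial]
    refine Finset.sum_congr rfl fun i _ => ?_
    rw [← Fintype.sum_subtype_add_sum_subtype (fun i => i ∈ S)]
    simp only [hwS, hwF, mul_zero, Finset.sum_const_zero, zero_add, Finset.mul_sum]
  rw [key, aux_quad L hsym hrow]
  have hnn : ∀ i j, 0 ≤ (-(L i j) * (w i - w j) ^ 2) / 2 := by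
    intro i j
    by_cases h : i = j
    · simp [h]
    · have := hoff i j h
      have := mul_nonneg (neg_nonneg.2 this) (sq_nonneg (w i - w j))
      linarith
  refine lt_of_le_of_ne (Finset.sum_nonneg fun i _ => Finset.sum_nonneg fun j _ => hnn i j) ?_
  intro h0
  have hz : ∀ i j, (-(L i j) * (w i - w j) ^ 2) / 2 = 0 := by
    intro i j
    have h1 := (Finset.sum_eq_zero_iff_of_nonneg
      (fun i _ => Finset.sum_nonneg fun j _ => hnn i j)).1 h0.symm i (Finset.mem_univ _)
    exact (Finset.sum_eq_zero_iff_of_nonneg (fun j _ => hnn i j)).1 h1 j (Finset.mem_univ _)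
  have hadj : ∀ i j, G.Adj i j → w i = w j := by
    intro i j h
    have h1 := ((hG i j).1 h).2
    have h2 := hz i j
    have h3 : (w i - w j)^2 = 0 := by
      have : L i j * (w i - w j)^2 = 0 := by linarith
      exact (mul_eq_zero.1 this).resolve_left h1.ne
    have := pow_eq_zero_iff (two_ne_zero) |>.1 h3
    linarith
  have hwalk : ∀ i j (p : G.Walk i j), w i = w j := by
    intro i j p
    induction p with
    | nil => rfl
    | cons h _ ih => exact (hadj _ _ h).trans ih
  obtain ⟨s, hs⟩ := hne
  apply hv
  funext i
  obtain ⟨p⟩ := hconn.preconnected i.1 s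
  rw [← hwF i, hwalk _ _ p, hwS ⟨s, hs⟩]
  rfl

lemma aux_min {m : Type*} [Fintype m] [DecidableEq m] [Nonempty m] (M : Matrix m m ℝ)
    (hM : M.PosDef) (lam : ℝ) (hlam : lam = sInf (spectrum ℝ M)) :
    0 < lam ∧ ∀ v : m → ℝ, lam * ∑ i, (v i)^2 ≤ ∑ i, v i * (M *ᵥ v) i := by
  have hs := hM.1.spectrum_real_eq_range_eigenvalues
  have hfin : (spectrum ℝ M).Finite := by rw [hs]; exact Set.finite_range _
  have hnon : (spectrum ℝ M).Nonempty := by rw [hs]; exact Set.range_nonempty _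
  have hmem : lam ∈ spectrum ℝ M := hlam ▸ hnon.csInf_mem hfin
  constructor
  · rw [hs] at hmem
    obtain ⟨i, hi⟩ := hmem
    rw [← hi]
    exact hM.eigenvalues_pos i
  · intro v
    have hps : (M - algebraMap ℝ (Matrix m m ℝ) lam).PosSemidef := by
      rw [Matrix.posSemidef_iff_isHermitian_and_spectrum_nonneg]
      constructor
      · refine hM.1.sub ?_
        ext i j
        simp [Matrix.algebraMap_matrix_apply, eq_comm]
      · rw [← spectrum.sub_singleton_eq]
        rintro x hx
        obtain ⟨a, ha, b, hb, rfl⟩ := Set.mem_sub.1 hx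
        rw [Set.mem_singleton_iff] at hb
        have := csInf_le hfin.bddBelow ha
        rw [← hlam] at this
        simp only [Set.mem_ofPred_eq]
        linarith
    have h := hps.dotProduct_mulVec_nonneg v
    rw [Algebra.algebraMap_eq_smul_one, Matrix.sub_mulVec, Matrix.smul_mulVec, Matrix.one_mulVec,
      dotProduct_sub, dotProduct_smul, star_trivial] at h
    simp only [dotProduct, smul_eq_mul] at h
    simp only [pow_two]
    linarith

/-- leader-follower consensus convergence. Let `L` be a weighted Laplacian
of a connected graph (symmetric, nonpositive off-diagonal entries, zero row sums, and the
graph with edges `{i,j}` where `L i j < 0` is connected), `S` a nonempty proper leader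
set, `lam` the smallest eigenvalue of the grounded Laplacian `L_ff`. If `x_f` solves
`x_f' = −L_ff x_f − L_fl (x̄·𝟏)`, then `lam > 0`, for all `t ≥ 0` the Euclidean norm of
the error satisfies `‖x_f(t) − x̄·𝟏‖ ≤ exp(−lam·t)·‖x_f(0) − x̄·𝟏‖`, and in particular
`x_f(t) → x̄·𝟏` as `t → ∞`. -/
theorem consensus_convergence {n : ℕ} (L : Matrix (Fin n) (Fin n) ℝ)
    (hsym : L.IsSymm)
    (hoff : ∀ i j, i ≠ j → L i j ≤ 0)
    (hrow : ∀ i, ∑ j, L i j = 0)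
    (G : SimpleGraph (Fin n)) (hG : ∀ i j, G.Adj i j ↔ i ≠ j ∧ L i j < 0)
    (hconn : G.Connected)
    (S : Finset (Fin n)) (hne : S.Nonempty) (hproper : S ≠ Finset.univ)
    (lam : ℝ)
    (hlam : lam = sInf (spectrum ℝ
      (L.submatrix (Subtype.val : {i : Fin n // i ∉ S} → Fin n)
        (Subtype.val : {i : Fin n // i ∉ S} → Fin n))))
    (xbar : ℝ) (xf : ℝ → ({i : Fin n // i ∉ S} → ℝ))
    (hxf : ∀ t : ℝ, HasDerivAt xf
      (-(L.submatrix (Subtype.val : {i : Fin n // i ∉ S} → Fin n)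
            (Subtype.val : {i : Fin n // i ∉ S} → Fin n)).mulVec (xf t)
        - (L.submatrix (Subtype.val : {i : Fin n // i ∉ S} → Fin n)
            (Subtype.val : {i : Fin n // i ∈ S} → Fin n)).mulVec (fun _ => xbar)) t) :
    0 < lam ∧
    (∀ t : ℝ, 0 ≤ t →
      Real.sqrt (∑ i, (xf t i - xbar) ^ 2) ≤
        Real.exp (-(lam * t)) * Real.sqrt (∑ i, (xf 0 i - xbar) ^ 2)) ∧
    Filter.Tendsto xf Filter.atTop (nhds (fun _ => xbar)) := by
  have hnon : Nonempty {i : Fin n // i ∉ S} := by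
    by_contra h
    apply hproper
    ext i
    simp only [Finset.mem_univ, iff_true]
    by_contra hi
    exact h ⟨⟨i, hi⟩⟩
  have hpd := aux_posdef L hsym hoff hrow G hG hconn S hne
  set M := L.submatrix (Subtype.val : {i : Fin n // i ∉ S} → Fin n)
        (Subtype.val : {i : Fin n // i ∉ S} → Fin n) with hM
  obtain ⟨hpos, hray⟩ := aux_min M hpd lam hlam
  have hd : ∀ t i, HasDerivAt (fun s => xf s i - xbar)
      (-(M *ᵥ (fun k => xf t k - xbar)) i) t := by
    intro t i
    have h := ((hasDerivAt_pi.1 (hxf t)) i).sub_const xbar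
    refine h.congr_deriv ?_
    have hr := hrow i
    rw [← Fintype.sum_subtype_add_sum_subtype (fun i => i ∈ S)] at hr
    have hr2 := congrArg (fun z => z * xbar) hr
    beta_reduce at hr2
    rw [zero_mul] at hr2
    simp only [add_mul, Finset.sum_mul] at hr2
    have hr3 : ∑ j : {i : Fin n // i ∈ S}, L i j * xbar
        + ∑ j : {i : Fin n // i ∉ S}, L i j * xbar = 0 := by
      convert hr2
    simp only [Pi.sub_apply, Pi.neg_apply, mulVec, dotProduct, hM,
      Matrix.submatrix_apply, mul_sub, Finset.sum_sub_distrib]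
    linarith
  set V : ℝ → ℝ := fun t => ∑ i, (xf t i - xbar)^2 with hV
  have hVd : ∀ t, HasDerivAt V
      (∑ i, 2 * (xf t i - xbar) * (-(M *ᵥ (fun k => xf t k - xbar)) i)) t := by
    intro t
    refine HasDerivAt.fun_sum fun i _ => ?_
    simpa using (hd t i).fun_pow 2
  have hanti : Antitone (fun t => Real.exp (2 * lam * t) * V t) := by
    refine antitone_of_hasDerivAt_nonpos (fun t =>
      ((((hasDerivAt_id t).const_mul (2 * lam)).exp).mul (hVd t))) ?_
    intro t
    have h := hray (fun k => xf t k - xbar)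
    have e : ∑ i, 2 * (xf t i - xbar) * (-(M *ᵥ (fun k => xf t k - xbar)) i)
        = - 2 * ∑ i, (xf t i - xbar) * (M *ᵥ (fun k => xf t k - xbar)) i := by
      rw [Finset.mul_sum]
      exact Finset.sum_congr rfl fun i _ => by ring
    have hE := Real.exp_pos (2 * lam * t)
    simp only [id, mul_one, Pi.zero_apply]
    rw [e]
    have := mul_nonneg hE.le (sub_nonneg.2 h)
    simp only [hV]
    nlinarith
  have hbound : ∀ t : ℝ, 0 ≤ t → Real.sqrt (V t) ≤ Real.exp (-(lam * t)) * Real.sqrt (V 0) := by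
    intro t ht
    have h := hanti ht
    simp only [mul_zero, Real.exp_zero, one_mul] at h
    have hE : Real.exp (-(lam * t)) ^ 2 * Real.exp (2 * lam * t) = 1 := by
      rw [← Real.exp_nat_mul, ← Real.exp_add, ← Real.exp_zero]
      congr 1
      push_cast
      ring
    have h2 : V t ≤ Real.exp (-(lam * t)) ^ 2 * V 0 := by
      have := mul_le_mul_of_nonneg_left h (sq_nonneg (Real.exp (-(lam * t))))
      rwa [← mul_assoc, hE, one_mul] at this
    calc Real.sqrt (V t) ≤ Real.sqrt (Real.exp (-(lam * t)) ^ 2 * V 0) := Real.sqrt_le_sqrt h2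
      _ = _ := by rw [Real.sqrt_mul (sq_nonneg _), Real.sqrt_sq (Real.exp_pos _).le]
  refine ⟨hpos, hbound, ?_⟩
  rw [tendsto_pi_nhds]
  intro i
  rw [tendsto_iff_dist_tendsto_zero]
  have hlim : Filter.Tendsto (fun t : ℝ => Real.exp (-(lam * t)) * Real.sqrt (V 0))
      Filter.atTop (nhds 0) := by
    have h1 : Filter.Tendsto (fun t : ℝ => Real.exp (-(lam * t))) Filter.atTop (nhds 0) :=
      Real.tendsto_exp_neg_atTop_nhds_zero.comp (Filter.tendsto_id.const_mul_atTop hpos)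
    simpa using h1.mul_const (Real.sqrt (V 0))
  refine squeeze_zero' (Filter.Eventually.of_forall fun t => dist_nonneg) ?_ hlim
  filter_upwards [Filter.eventually_ge_atTop 0] with t ht
  refine le_trans ?_ (hbound t ht)
  rw [Real.dist_eq]
  apply Real.abs_le_sqrt
  exact Finset.single_le_sum (f := fun i => (xf t i - xbar)^2)
    (fun i _ => sq_nonneg _) (Finset.mem_univ i)
end
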